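/- Let G = ℤ/2 × ℤ/2 = {0,a,b,c}, where a,b,c denote the three nonzero elements, so n = 4 and d = 2+√5. A triple (ε,η,A) is a solution of the polynomial equations for G if and only if η_g = 1 for all g and there exist s ∈ {1,−1} and z ∈ {√d, −√d, i·√d, −i·√d} such that ε_h(g) = χ(h,g), where χ is given (rows indexed by h, columns by g, in the order 0,a,b,c) by the matrix [[1,1,1,1],[1,−1,s,−s],[1,−s,−1,s],[1,s,−s,−1]], and A_0, A_a, A_b, A_c are (1/(d−1)) times the matrices (rows h, columns k, order 0,a,b,c): A_0 = [[d−2,−1,−1,−1],[−1,−1,z,conj(z)],[−1,conj(z),−1,z],[−1,z,conj(z),−1]]; A_a = [[d−2,−1,−1,−1],[−1,1,s·z,−s·conj(z)],[−1,s·conj(z),s,−z],[−1,−s·z,−conj(z),−s]]; A_b = [[d−2,−1,−1,−1],[−1,−s,−s·z,−conj(z)],[−1,−s·conj(z),1,s·z],[−1,−z,s·conj(z),s]]; A_c = [[d−2,−1,−1,−1],[−1,s,−z,s·conj(z)],[−1,−conj(z),−s,−s·z],[−1,s·z,−s·conj(z),1]]. Moreover, under gauge transformations and the action of the automorphism group of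 G, this solution set decomposes into exactly two orbits: the solutions with z ∈ {√d,−√d} and the solutions with z ∈ {i·√d,−i·√d}. -/

import Mathlib

open scoped BigOperators
open Complex

/-- `d = (n + √(n²+4))/2` where `n` is the cardinality of `G`. -/
noncomputable def dR (G : Type) [Fintype G] : ℝ :=
  ((Fintype.card G : ℝ) + Real.sqrt ((Fintype.card G : ℝ) ^ 2 + 4)) / 2

/-- The complex number `d`. -/
noncomputable def dC (G : Type) [Fintype G] : ℂ := ((dR G : ℝ) : ℂ)

/-- Equation (9) of the polynomial equations, at fixed parameters `g p q x y`. -/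
def Eq9At {G : Type} [AddCommGroup G] [Fintype G] [DecidableEq G]
    (ε : G → G → ℂ) (η : G → ℂ) (A : G → G → G → ℂ) (g p q x y : G) : Prop :=
  ∑ l : G, A g (x + y) l * A (g - p + x) (-x) (l + p) * A (g - q + x + y) (-y) (l + q)
    = η g * η (g + q + x) * η (g + p + q + y) *
        (starRingEnd ℂ) (η (g + p)) * (starRingEnd ℂ) (η (g + x + y)) *
        (starRingEnd ℂ) (η (g + q + x + y)) *
        ε p (g - p + x) * ε (p + x) (g - p + q + y) *
        ε q (g - q + x + y) * ε (q + y) (g - q + x) *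
        A g (p + x) (q + x + y) * A (g - p) (q + y) (p + x + y)
      - (if x = (0 : G) then (1 : ℂ) else 0) * (if y = (0 : G) then (1 : ℂ) else 0) *
        η g * η (g + p) * η (g + q) / dC G

/-- Equations (1)–(8) of the polynomial equations for `(ε, η, A)` on a finite abelian
group `G` (with `ε` taking values in `{1, −1}`). -/
structure PolyEqs1to8 {G : Type} [AddCommGroup G] [Fintype G] [DecidableEq G]
    (ε : G → G → ℂ) (η : G → ℂ) (A : G → G → G → ℂ) : Prop where
  eps_pm : ∀ h g : G, ε h g = 1 ∨ ε h g = -1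
  eq1 : ∀ g h k : G, ε (h + k) g = ε h g * ε k (g + h + h)
  eq1' : ∀ h : G, ε h 0 = 1
  eq2 : ∀ g h : G, η (g + h + h) = η g
  eq2' : ∀ g : G, η g ^ 3 = 1
  eq3 : ∀ g : G, ∑ h : G, A g h 0 = -(starRingEnd ℂ) (η g) / dC G
  eq4 : ∀ g g' k : G,
    ∑ h : G, A g (h - g) k * (starRingEnd ℂ) (A g' (h - g') k)
      = (if g = g' then (1 : ℂ) else 0)
        - (if k = (0 : G) then (1 : ℂ) else 0) * (starRingEnd ℂ) (η g) * η g' / dC G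
  eq5 : ∀ g h p q : G,
    A (g + h + h) p q = ε h g * ε h (g + p) * ε h (g + q) * ε h (g + p + q) * A g p q
  eq6 : ∀ g h k : G, A g k h = (starRingEnd ℂ) (A g h k)
  eq7a : ∀ g h k : G,
    A g h k = η g * ε (-k) (g + h) * ε (-k) (g + k) * ε (-k) (g + h + k) * A g (-k) (h - k)
  eq7b : ∀ g h k : G,
    A g h k = (starRingEnd ℂ) (η g) * ε (-h) (g + h) * ε (-h) (g + k) * ε (-h) (g + h + k) *
      A g (k - h) (-h)
  eq8a : ∀ g h k : G,
    A g h k = η g * η (g + k) * (starRingEnd ℂ) (η (g + h)) * (starRingEnd ℂ) (η (g + h + k)) *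
      ε h g * ε h (g + k) * A (g + h) h k
  eq8b : ∀ g h k : G,
    A g h k = (starRingEnd ℂ) (η g) * (starRingEnd ℂ) (η (g + h)) * η (g + k) * η (g + h + k) *
      ε k g * ε k (g + h) * A (g + k) h k

/-- A solution of the polynomial equations (1)–(9) for a finite abelian group `G`. -/
structure PolySolution {G : Type} [AddCommGroup G] [Fintype G] [DecidableEq G]
    (ε : G → G → ℂ) (η : G → ℂ) (A : G → G → G → ℂ)
    extends PolyEqs1to8 ε η A : Prop where
  eq9 : ∀ g p q x y : G, Eq9At ε η A g p q x y

/-- Equivalence of solutions under a gauge transformation combined with a group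
automorphism. -/
def EquivSol {G : Type} [AddCommGroup G] [Fintype G] [DecidableEq G]
    (ε : G → G → ℂ) (η : G → ℂ) (A : G → G → G → ℂ)
    (ε' : G → G → ℂ) (η' : G → ℂ) (A' : G → G → G → ℂ) : Prop :=
  ∃ (δ : G → ℂ) (θ : G ≃+ G),
    δ 0 = 1 ∧ (∀ g : G, δ g = 1 ∨ δ g = -1) ∧
    (∀ h g : G, ε' h g = δ g * δ (g + h + h) * ε (θ h) (θ g)) ∧
    (∀ g : G, η' g = η (θ g)) ∧
    (∀ g h k : G, A' g h k = δ g * δ (g + h) * δ (g + k) * δ (g + h + k) *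
      A (θ g) (θ h) (θ k))

/-- The Klein four-group `{0, a, b, c}`. -/
abbrev K4 : Type := ZMod 2 × ZMod 2

/-- The element `a` of the Klein four-group. -/
def aK : K4 := (1, 0)

/-- The element `b` of the Klein four-group. -/
def bK : K4 := (0, 1)

/-- The enumeration `0, a, b, c` of the Klein four-group as indices in `Fin 4`. -/
def idxK : K4 → Fin 4 := fun g =>
  if g = 0 then 0 else if g = aK then 1 else if g = bK then 2 else 3

/-- The character table `χ` (rows `h`, columns `g`, in the order `0, a, b, c`),
depending on the sign `s`. -/
noncomputable def chiMatK (s : ℂ) : Fin 4 → Fin 4 → ℂ :=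
  ![![1, 1, 1, 1], ![1, -1, s, -s], ![1, -s, -1, s], ![1, s, -s, -1]]

/-- The matrices `A_0, A_a, A_b, A_c` (rows `h`, columns `k`, in the order `0, a, b, c`) of
the solutions for the Klein four-group, before multiplication by `1/(d−1)`. -/
noncomputable def AmatK (s z : ℂ) : Fin 4 → Fin 4 → Fin 4 → ℂ :=
  ![![![dC K4 - 2, -1, -1, -1],
     ![-1, -1, z, star z],
     ![-1, star z, -1, z],
     ![-1, z, star z, -1]],
    ![![dC K4 - 2, -1, -1, -1],
     ![-1, 1, s * z, -(s * star z)],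
     ![-1, s * star z, s, -z],
     ![-1, -(s * z), -star z, -s]],
    ![![dC K4 - 2, -1, -1, -1],
     ![-1, -s, -(s * z), -star z],
     ![-1, -(s * star z), 1, s * z],
     ![-1, -z, s * star z, s]],
    ![![dC K4 - 2, -1, -1, -1],
     ![-1, s, -z, s * star z],
     ![-1, -star z, -s, -(s * z)],
     ![-1, s * z, -(s * star z), 1]]]

/-- The explicit `ε` of the solution for the Klein four-group with sign `s`. -/
noncomputable def epsK (s : ℂ) : K4 → K4 → ℂ := fun h g => chiMatK s (idxK h) (idxK g)

/-- The explicit `A` of the solution for the Klein four-group with parameters `s, z`. -/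
noncomputable def AfunK (s z : ℂ) : K4 → K4 → K4 → ℂ := fun g h k =>
  (1 / (dC K4 - 1)) * AmatK s z (idxK g) (idxK h) (idxK k)

/-- A computable copy of the Klein four-group. -/
inductive KK where
  | o | a | b | c

namespace KK

/-- Addition table. -/
def add : KK → KK → KK
  | o, y => y
  | a, o => a
  | a, a => o
  | a, b => c
  | a, c => b
  | b, o => b
  | b, a => c
  | b, b => o
  | b, c => a
  | c, o => c
  | c, a => b
  | c, b => a
  | c, c => o

/-- Comparison. -/
def eqb : KK → KK → Bool
  | o, o => true
  | a, a => true
  | b, b => true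
  | c, c => true
  | _, _ => false

/-- The identification with `K4`. -/
def toK : KK → K4
  | o => 0
  | a => (1, 0)
  | b => (0, 1)
  | c => (1, 1)

/-- The index. -/
def ix : KK → Fin 4
  | o => 0
  | a => 1
  | b => 2
  | c => 3

/-- Conjunction over the group. -/
def all (f : KK → Bool) : Bool := f o && (f a && (f b && f c))

theorem all_spec {f : KK → Bool} (h : all f = true) (x : KK) : f x = true := by
  simp only [all, Bool.and_eq_true] at h
  cases x <;> simp [h]

theorem toK_surj (g : K4) : ∃ x : KK, g = toK x := by
  revert g
  have h : ∀ g : K4, g = toK o ∨ g = toK a ∨ g = toK b ∨ g = toK c := by decide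
  intro g
  rcases h g with h | h | h | h <;> exact ⟨_, h⟩

theorem toK_add (x y : KK) : toK x + toK y = toK (add x y) := by
  cases x <;> cases y <;> decide

theorem toK_sub (x y : KK) : toK x - toK y = toK (add x y) := by
  cases x <;> cases y <;> decide

theorem toK_neg (x : KK) : -toK x = toK x := by
  cases x <;> decide

theorem toK_eq (x y : KK) : toK x = toK y ↔ eqb x y = true := by
  cases x <;> cases y <;> decide

theorem toK_zero : (0 : K4) = toK o := rfl

theorem idx_toK (x : KK) : idxK (toK x) = ix x := by
  cases x <;> decide

theorem sum_toK (f : K4 → ℂ) : ∑ g : K4, f g = f (toK o) + f (toK a) + f (toK b) + f (toK c) := by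
  rw [Fintype.sum_prod_type]
  have h : ∀ u : ZMod 2 → ℂ, ∑ i, u i = u 0 + u 1 := fun u => Fin.sum_univ_two u
  simp only [h, toK]
  rw [Prod.mk_zero_zero]
  ring

end KK

open KK

theorem dR_eq : dR K4 = 2 + Real.sqrt 5 := by
  have h : Fintype.card K4 = 4 := by decide
  unfold dR
  rw [h]
  have h2 : Real.sqrt (((4 : ℕ) : ℝ) ^ 2 + 4) = 2 * Real.sqrt 5 := by
    rw [show (((4 : ℕ) : ℝ) ^ 2 + 4) = 2 ^ 2 * 5 by norm_num, Real.sqrt_mul (by norm_num),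
      Real.sqrt_sq (by norm_num)]
  rw [h2]
  push_cast
  ring

theorem dR_sq : dR K4 ^ 2 = 4 * dR K4 + 1 := by
  rw [dR_eq]
  have := Real.sq_sqrt (show (0 : ℝ) ≤ 5 by norm_num)
  nlinarith

theorem dR_gt : 4 < dR K4 := by
  rw [dR_eq]
  have : (2 : ℝ) < Real.sqrt 5 := by
    rw [Real.lt_sqrt] <;> norm_num
  linarith

theorem dC_sq : dC K4 ^ 2 = 4 * dC K4 + 1 := by
  unfold dC
  exact_mod_cast dR_sq

theorem dC_ne : dC K4 ≠ 0 := by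
  unfold dC
  have := dR_gt
  exact_mod_cast (by linarith : dR K4 ≠ 0)

theorem dC_sub_ne : dC K4 - 1 ≠ 0 := by
  unfold dC
  have := dR_gt
  have h : dR K4 - 1 ≠ 0 := by linarith
  exact_mod_cast h

/-- Integral elements `a + b z + c d + e z d`. -/
structure RR where
  (a b c e : Int)

/-- Special elements: `d - 2`, `± 1`, `± z`. -/
inductive EE where
  | dd
  | one (n : Bool)
  | zz (n : Bool)

namespace RR

/-- Addition. -/
def add (x y : RR) : RR := ⟨x.a + y.a, x.b + y.b, x.c + y.c, x.e + y.e⟩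

/-- Change of sign. -/
def sg (n : Bool) (x : RR) : RR := bif n then ⟨-x.a, -x.b, -x.c, -x.e⟩ else x

/-- Multiplication by `d`. -/
def muld (x : RR) : RR := ⟨x.c, x.e, x.a + 4 * x.c, x.b + 4 * x.e⟩

/-- Multiplication by `z`, where `z² = ± d`. -/
def mulz (t : Bool) (x : RR) : RR :=
  bif t then ⟨-x.e, x.a, -(x.b + 4 * x.e), x.c⟩ else ⟨x.e, x.a, x.b + 4 * x.e, x.c⟩

/-- Multiplication by a special element. -/
def act (t : Bool) : EE → RR → RR
  | .dd, x => ⟨x.c - 2 * x.a, x.e - 2 * x.b, x.a + 2 * x.c, x.b + 2 * x.e⟩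
  | .one n, x => sg n x
  | .zz n, x => sg n (mulz t x)

/-- Complex conjugation of a special element, where `conj z = ± z`. -/
def cj (t : Bool) : EE → EE
  | .zz n => .zz (xor t n)
  | x => x

/-- The value of a special element. -/
def val : EE → RR
  | .dd => ⟨-2, 0, 1, 0⟩
  | .one n => sg n ⟨1, 0, 0, 0⟩
  | .zz n => sg n ⟨0, 1, 0, 0⟩

/-- Comparison. -/
def eqb (x y : RR) : Bool :=
  decide (x.a = y.a) && (decide (x.b = y.b) && (decide (x.c = y.c) && decide (x.e = y.e)))

/-- Evaluation. -/
noncomputable def ev (z : ℂ) (x : RR) : ℂ := x.a + x.b * z + x.c * dC K4 + x.e * (z * dC K4)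

/-- A sign as a complex number. -/
noncomputable def sC (n : Bool) : ℂ := bif n then -1 else 1

/-- The complex value of a special element. -/
noncomputable def eE (z : ℂ) : EE → ℂ
  | .dd => dC K4 - 2
  | .one n => sC n
  | .zz n => sC n * z

theorem sC_xor (m n : Bool) : sC (xor m n) = sC m * sC n := by
  cases m <;> cases n <;> simp [sC]

theorem sC_mul_self (m : Bool) : sC m * sC m = 1 := by
  cases m <;> simp [sC]

theorem sC_conj (m : Bool) : (starRingEnd ℂ) (sC m) = sC m := by
  cases m <;> simp [sC]

theorem eqb_spec {x y : RR} (h : eqb x y = true) : x = y := by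
  cases x; cases y
  simpa [eqb] using h

theorem ev_add (z : ℂ) (x y : RR) : ev z (add x y) = ev z x + ev z y := by
  simp only [ev, add]; push_cast; ring

theorem ev_sg (z : ℂ) (n : Bool) (x : RR) : ev z (sg n x) = sC n * ev z x := by
  cases n <;> simp only [ev, sg, sC, cond_true, cond_false] <;> push_cast <;> ring

theorem ev_muld (z : ℂ) (x : RR) : ev z (muld x) = dC K4 * ev z x := by
  have hd := dC_sq
  simp only [ev, muld]; push_cast
  linear_combination (-(x.c : ℂ) - x.e * z) * hd

theorem ev_mulz {z : ℂ} {t : Bool} (hz : z ^ 2 = sC t * dC K4) (x : RR) :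
    ev z (mulz t x) = z * ev z x := by
  have hd := dC_sq
  cases t <;> simp only [ev, mulz, sC, cond_true, cond_false] at * <;> push_cast
  · linear_combination (-(x.b : ℂ) - x.e * dC K4) * hz - (x.e : ℂ) * hd
  · linear_combination (-(x.b : ℂ) - x.e * dC K4) * hz + (x.e : ℂ) * hd

theorem ev_act {z : ℂ} {t : Bool} (hz : z ^ 2 = sC t * dC K4) (m : EE) (x : RR) :
    ev z (act t m x) = eE z m * ev z x := by
  have hd := dC_sq
  cases m with
  | dd =>
    simp only [ev, act, eE]; push_cast
    linear_combination (-(x.c : ℂ) - x.e * z) * hd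
  | one n => simp only [act, eE, ev_sg]
  | zz n => simp only [act, eE, ev_sg, ev_mulz hz]; ring

theorem ev_val (z : ℂ) (m : EE) : ev z (val m) = eE z m := by
  cases m with
  | dd => simp [ev, val, eE]; ring
  | one n => simp only [val, eE, ev_sg]; simp [ev]
  | zz n => simp only [val, eE, ev_sg]; simp [ev]

theorem eE_cj {z : ℂ} {t : Bool} (hz : star z = sC t * z) (x : EE) :
    eE z (cj t x) = (starRingEnd ℂ) (eE z x) := by
  have hd : (starRingEnd ℂ) (dC K4) = dC K4 := Complex.conj_ofReal _
  have hz' : (starRingEnd ℂ) z = sC t * z := hz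
  cases x <;> simp only [eE, cj, map_sub, map_mul, map_ofNat, hd, hz', sC_conj, sC_xor]
  ring

end RR

open RR

/-- The model of `χ`. -/
def chiI (s : Bool) : KK → KK → Bool
  | .o, _ => false
  | _, .o => false
  | .a, .a => true
  | .a, .b => s
  | .a, .c => !s
  | .b, .a => !s
  | .b, .b => true
  | .b, .c => s
  | .c, .a => s
  | .c, .b => !s
  | .c, .c => true

/-- The model of `(d-1) A`. -/
def AI (s t : Bool) : KK → KK → KK → EE
  | _, .o, .o => .dd
  | _, .o, _ => .one true
  | _, _, .o => .one true
  | .o, .a, .a => .one true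
  | .o, .a, .b => .zz false
  | .o, .a, .c => .zz t
  | .o, .b, .a => .zz t
  | .o, .b, .b => .one true
  | .o, .b, .c => .zz false
  | .o, .c, .a => .zz false
  | .o, .c, .b => .zz t
  | .o, .c, .c => .one true
  | .a, .a, .a => .one false
  | .a, .a, .b => .zz s
  | .a, .a, .c => .zz (!(xor s t))
  | .a, .b, .a => .zz (xor s t)
  | .a, .b, .b => .one s
  | .a, .b, .c => .zz true
  | .a, .c, .a => .zz (!s)
  | .a, .c, .b => .zz (!t)
  | .a, .c, .c => .one (!s)
  | .b, .a, .a => .one (!s)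
  | .b, .a, .b => .zz (!s)
  | .b, .a, .c => .zz (!t)
  | .b, .b, .a => .zz (!(xor s t))
  | .b, .b, .b => .one false
  | .b, .b, .c => .zz s
  | .b, .c, .a => .zz true
  | .b, .c, .b => .zz (xor s t)
  | .b, .c, .c => .one s
  | .c, .a, .a => .one s
  | .c, .a, .b => .zz true
  | .c, .a, .c => .zz (xor s t)
  | .c, .b, .a => .zz (!t)
  | .c, .b, .b => .one (!s)
  | .c, .b, .c => .zz (!s)
  | .c, .c, .a => .zz s
  | .c, .c, .b => .zz (!(xor s t))
  | .c, .c, .c => .one false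

theorem epsK_toK (s : Bool) (h g : KK) : epsK (sC s) (toK h) (toK g) = sC (chiI s h g) := by
  simp only [epsK, idx_toK]
  cases h <;> cases g <;> cases s <;> simp [chiMatK, chiI, ix, sC]

theorem AfunK_toK (s t : Bool) (z : ℂ) (hz : star z = sC t * z) (g h k : KK) :
    AfunK (sC s) z (toK g) (toK h) (toK k) = (1 / (dC K4 - 1)) * eE z (AI s t g h k) := by
  simp only [AfunK, idx_toK]
  congr 1
  cases g <;> cases h <;> cases k <;>
    (simp only [AmatK, AI, ix, eE, hz]; cases s <;> cases t <;> simp [sC])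

/-- Check of equation (9). -/
def ck9 (s t : Bool) : Bool :=
  KK.all fun g => KK.all fun p => KK.all fun q => KK.all fun x => KK.all fun y =>
    let f := fun l => act t (AI s t g (KK.add x y) l)
      (act t (AI s t (KK.add (KK.add g p) x) x (KK.add l p))
      (val (AI s t (KK.add (KK.add (KK.add g q) x) y) y (KK.add l q))))
    let r := sg (xor (chiI s p (KK.add (KK.add g p) x))
          (xor (chiI s (KK.add p x) (KK.add (KK.add (KK.add g p) q) y))
          (xor (chiI s q (KK.add (KK.add (KK.add g q) x) y))
          (chiI s (KK.add q y) (KK.add (KK.add g q) x)))))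
        (act t (AI s t g (KK.add p x) (KK.add (KK.add q x) y))
          (val (AI s t (KK.add g p) (KK.add q y) (KK.add (KK.add p x) y))))
    RR.eqb (RR.add (RR.add (RR.add (f .o) (f .a)) (RR.add (f .b) (f .c))) r)
      (RR.add (muld r) ⟨bif KK.eqb x .o then (bif KK.eqb y .o then -8 else 0) else 0, 0, 0, 0⟩)
theorem ck9_truetrue : ck9 true true = true := by decide +kernel

theorem ck9_truefalse : ck9 true false = true := by decide +kernel

theorem ck9_falsetrue : ck9 false true = true := by decide +kernel

theorem ck9_falsefalse : ck9 false false = true := by decide +kernel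

/-- Check of equation (4). -/
def ck4 (s t : Bool) : Bool :=
  KK.all fun g => KK.all fun g' => KK.all fun k =>
    let f := fun h => act t (AI s t g (KK.add h g) k) (val (cj t (AI s t g' (KK.add h g') k)))
    RR.eqb (RR.add (RR.add (f .o) (f .a)) (RR.add (f .b) (f .c)))
      (RR.add (bif KK.eqb g g' then ⟨2, 0, 2, 0⟩ else ⟨0, 0, 0, 0⟩)
        (bif KK.eqb k .o then ⟨6, 0, -2, 0⟩ else ⟨0, 0, 0, 0⟩))

/-- Check of equation (3). -/
def ck3 (s t : Bool) : Bool :=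
  KK.all fun g =>
    let f := fun h => val (AI s t g h .o)
    RR.eqb (RR.add (RR.add (f .o) (f .a)) (RR.add (f .b) (f .c))) ⟨-5, 0, 1, 0⟩

/-- Check of equations (5) to (8). -/
def ckL (s t : Bool) : Bool :=
  KK.all fun g => KK.all fun h => KK.all fun k =>
    RR.eqb (val (AI s t g k h)) (val (cj t (AI s t g h k))) &&
    (RR.eqb (val (AI s t g h k)) (sg (xor (chiI s k (KK.add g h))
      (xor (chiI s k (KK.add g k)) (chiI s k (KK.add (KK.add g h) k))))
      (val (AI s t g k (KK.add h k)))) &&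
    (RR.eqb (val (AI s t g h k)) (sg (xor (chiI s h (KK.add g h))
      (xor (chiI s h (KK.add g k)) (chiI s h (KK.add (KK.add g h) k))))
      (val (AI s t g (KK.add k h) h))) &&
    (RR.eqb (val (AI s t g h k)) (sg (xor (chiI s h g) (chiI s h (KK.add g k)))
      (val (AI s t (KK.add g h) h k))) &&
    RR.eqb (val (AI s t g h k)) (sg (xor (chiI s k g) (chiI s k (KK.add g h)))
      (val (AI s t (KK.add g k) h k))))))

/-- Check of equation (5). -/
def ck5 (s t : Bool) : Bool :=
  KK.all fun g => KK.all fun h => KK.all fun p => KK.all fun q =>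
    RR.eqb (val (AI s t (KK.add (KK.add g h) h) p q)) (sg (xor (chiI s h g)
      (xor (chiI s h (KK.add g p)) (xor (chiI s h (KK.add g q))
        (chiI s h (KK.add (KK.add g p) q)))))
      (val (AI s t g p q)))

/-- Check of equation (1). -/
def ck1 (s : Bool) : Bool :=
  KK.all fun g => KK.all fun h => KK.all fun k =>
    chiI s (KK.add h k) g == xor (chiI s h g) (chiI s k (KK.add (KK.add g h) h))

theorem ck9_all (s t : Bool) : ck9 s t = true := by
  cases s <;> cases t
  · exact ck9_falsefalse
  · exact ck9_falsetrue
  · exact ck9_truefalse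
  · exact ck9_truetrue

theorem ck4_all (s t : Bool) : ck4 s t = true := by
  cases s <;> cases t <;> decide +kernel

theorem ck3_all (s t : Bool) : ck3 s t = true := by
  cases s <;> cases t <;> decide +kernel

theorem ckL_all (s t : Bool) : ckL s t = true := by
  cases s <;> cases t <;> decide +kernel

theorem ck5_all (s t : Bool) : ck5 s t = true := by
  cases s <;> cases t <;> decide +kernel

theorem ck1_all (s : Bool) : ck1 s = true := by
  cases s <;> decide +kernel

theorem lin_of {z : ℂ} {m m' : EE} {n : Bool}
    (h : RR.eqb (val m) (sg n (val m')) = true) : eE z m = sC n * eE z m' := by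
  have h1 := congrArg (ev z) (eqb_spec h)
  rwa [ev_sg, ev_val, ev_val] at h1

theorem back8 {s t : Bool} {z : ℂ} (hz : z ^ 2 = sC t * dC K4) (hs : star z = sC t * z)
    (η : K4 → ℂ) (hη : ∀ g, η g = 1) : PolyEqs1to8 (epsK (sC s)) η (AfunK (sC s) z) := by
  have hd := dC_sq
  have hd0 := dC_ne
  have hd1 := dC_sub_ne
  have hcd : (starRingEnd ℂ) (dC K4) = dC K4 := Complex.conj_ofReal _
  refine { eps_pm := ?_, eq1 := ?_, eq1' := ?_, eq2 := ?_, eq2' := ?_, eq3 := ?_, eq4 := ?_,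
           eq5 := ?_, eq6 := ?_, eq7a := ?_, eq7b := ?_, eq8a := ?_, eq8b := ?_ }
  · intro h g
    obtain ⟨h, rfl⟩ := toK_surj h
    obtain ⟨g, rfl⟩ := toK_surj g
    rw [epsK_toK]
    cases chiI s h g <;> simp [sC]
  · intro g h k
    obtain ⟨g, rfl⟩ := toK_surj g
    obtain ⟨h, rfl⟩ := toK_surj h
    obtain ⟨k, rfl⟩ := toK_surj k
    have := all_spec (all_spec (all_spec (ck1_all s) g) h) k
    rw [beq_iff_eq] at this
    simp only [toK_add, epsK_toK, this, sC_xor]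
  · intro h
    obtain ⟨h, rfl⟩ := toK_surj h
    rw [toK_zero, epsK_toK]
    cases h <;> simp [chiI, sC]
  · intro g h; simp only [hη]
  · intro g; simp only [hη]; norm_num
  · intro g
    obtain ⟨g, rfl⟩ := toK_surj g
    have := congrArg (ev z) (eqb_spec (all_spec (ck3_all s t) g))
    simp only [ev_add, ev_val] at this
    simp only [toK_zero, sum_toK, AfunK_toK s t z hs, hη, map_one]
    simp [ev] at this
    rw [← mul_add, ← mul_add, ← mul_add, add_assoc (_ + _), this]
    field_simp
    linear_combination hd
  · intro g g' k
    obtain ⟨g, rfl⟩ := toK_surj g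
    obtain ⟨g', rfl⟩ := toK_surj g'
    obtain ⟨k, rfl⟩ := toK_surj k
    have := congrArg (ev z) (eqb_spec (all_spec (all_spec (all_spec (ck4_all s t) g) g') k))
    simp only [ev_add, ev_act hz, ev_val, eE_cj hs] at this
    simp only [toK_zero, sum_toK, toK_sub, toK_eq, AfunK_toK s t z hs, hη, map_one, map_mul,
      map_div₀, map_sub, hcd]
    have key : ∀ X Y : ℂ, (1 / (dC K4 - 1) * X) * (1 / (dC K4 - 1) * Y) = (X * Y) / (2 * dC K4 + 2) := by
      intro X Y
      have h2 : (dC K4 - 1) * (dC K4 - 1) = 2 * dC K4 + 2 := by linear_combination hd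
      rw [← h2]; field_simp
    have h3 : 2 * dC K4 + 2 ≠ 0 := by
      have h2 : (dC K4 - 1) * (dC K4 - 1) = 2 * dC K4 + 2 := by linear_combination hd
      rw [← h2]; exact mul_ne_zero hd1 hd1
    simp only [key]
    rw [← add_div, ← add_div, ← add_div, add_assoc (_ + _), this, div_eq_iff h3]
    generalize KK.eqb g g' = B1
    generalize KK.eqb k o = B2
    cases B1 <;> cases B2 <;> simp [ev] <;> field_simp
    all_goals first | ring1 | linear_combination (-2) * hd | linear_combination 2 * hd
  · intro g h p q
    obtain ⟨g, rfl⟩ := toK_surj g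
    obtain ⟨h, rfl⟩ := toK_surj h
    obtain ⟨p, rfl⟩ := toK_surj p
    obtain ⟨q, rfl⟩ := toK_surj q
    have := lin_of (z := z) (all_spec (all_spec (all_spec (all_spec (ck5_all s t) g) h) p) q)
    simp only [toK_add, AfunK_toK s t z hs, epsK_toK, this, sC_xor]
    ring
  all_goals (
    intro g h k
    obtain ⟨g, rfl⟩ := toK_surj g
    obtain ⟨h, rfl⟩ := toK_surj h
    obtain ⟨k, rfl⟩ := toK_surj k
    have hh := all_spec (all_spec (all_spec (ckL_all s t) g) h) k
    simp only [Bool.and_eq_true] at hh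
    obtain ⟨h6, h7a, h7b, h8a, h8b⟩ := hh)
  · have := congrArg (ev z) (eqb_spec h6)
    simp only [ev_val, eE_cj hs] at this
    simp only [AfunK_toK s t z hs, map_mul, map_div₀, map_sub, hcd, map_one, this]
  · simp only [toK_add, toK_neg, toK_sub, AfunK_toK s t z hs, epsK_toK, lin_of h7a, sC_xor, hη]
    ring
  · simp only [toK_add, toK_neg, toK_sub, AfunK_toK s t z hs, epsK_toK, lin_of h7b, sC_xor, hη,
      map_one]
    ring
  · simp only [toK_add, AfunK_toK s t z hs, epsK_toK, lin_of h8a, sC_xor, hη,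
      map_one]
    ring
  · simp only [toK_add, AfunK_toK s t z hs, epsK_toK, lin_of h8b, sC_xor, hη,
      map_one]
    ring

theorem back {s t : Bool} {z : ℂ} (hz : z ^ 2 = sC t * dC K4) (hs : star z = sC t * z)
    (η : K4 → ℂ) (hη : ∀ g, η g = 1) : PolySolution (epsK (sC s)) η (AfunK (sC s) z) := by
  have hd := dC_sq
  have hd0 := dC_ne
  have hd1 := dC_sub_ne
  refine { toPolyEqs1to8 := back8 hz hs η hη, eq9 := ?_ }
  · intro g p q x y
    obtain ⟨g, rfl⟩ := toK_surj g
    obtain ⟨p, rfl⟩ := toK_surj p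
    obtain ⟨q, rfl⟩ := toK_surj q
    obtain ⟨x, rfl⟩ := toK_surj x
    obtain ⟨y, rfl⟩ := toK_surj y
    have := congrArg (ev z) (eqb_spec (all_spec (all_spec (all_spec (all_spec (all_spec
      (ck9_all s t) g) p) q) x) y))
    simp only [ev_add, ev_muld, ev_sg, ev_act hz, ev_val, sC_xor] at this
    unfold Eq9At
    simp only [toK_zero, sum_toK, toK_sub, toK_add, toK_neg, toK_eq, AfunK_toK s t z hs,
      epsK_toK, hη, map_one]
    have h3 : (dC K4 - 1) ^ 3 = 8 * dC K4 := by linear_combination (dC K4 + 1) * hd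
    have h4 : ∀ X Y Z : ℂ, (1 / (dC K4 - 1) * X) * (1 / (dC K4 - 1) * Y) * (1 / (dC K4 - 1) * Z)
        = (X * (Y * Z)) / (dC K4 - 1) ^ 3 := by
      intro X Y Z
      field_simp
    simp only [h4]
    rw [← add_div, ← add_div, ← add_div, add_assoc (_ + _), eq_sub_of_add_eq this,
      div_eq_iff (pow_ne_zero 3 hd1), sub_mul]
    have h5 : (if KK.eqb x o = true then (1 : ℂ) else 0) * (if KK.eqb y o = true then (1 : ℂ) else 0)
        * 1 * 1 * 1 / dC K4 * (dC K4 - 1) ^ 3 = - ev z ⟨bif KK.eqb x .o then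
          (bif KK.eqb y .o then -8 else 0) else 0, 0, 0, 0⟩ := by
      rw [h3]
      generalize KK.eqb x o = B1
      generalize KK.eqb y o = B2
      cases B1 <;> cases B2 <;> simp [ev]
      field_simp
    rw [h5]
    field_simp
    ring

theorem real_key {d r0 ra rb rc : ℝ} (hd : d ^ 2 = 4 * d + 1) (hd4 : 4 < d)
    (hb : rb ^ 2 = ra ^ 2) (hc : rc ^ 2 = ra ^ 2) (h1 : r0 + ra + rb + rc = -1 / d)
    (h2 : r0 ^ 2 + ra ^ 2 + rb ^ 2 + rc ^ 2 = 1 - 1 / d)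
    (h3 : r0 ^ 3 + ra ^ 3 + rb ^ 3 + rc ^ 3 = r0 ^ 2 - 1 / d) :
    r0 = (d - 2) / (d - 1) ∧ ra = -1 / (d - 1) ∧ rb = -1 / (d - 1) ∧ rc = -1 / (d - 1) := by
  have hd0 : d ≠ 0 := by linarith
  have hd1 : d - 1 ≠ 0 := by linarith
  have hi : 1 / d = d - 4 := by field_simp; linarith
  have hj : 1 / (d - 1) = (d - 3) / 4 := by field_simp; linarith
  have hk : (d - 2) / (d - 1) = (7 - d) / 4 := by field_simp; linarith
  have hj' : -1 / (d - 1) = -((d - 3) / 4) := by rw [← hj]; ring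
  rw [hj', hk]
  rw [neg_div, hi] at h1
  rw [hi] at h2 h3
  -- the case of two equal signs cancelling
  have bad : ∀ x y : ℝ, y + x = -(d - 4) → y ^ 2 + 3 * x ^ 2 = 1 - (d - 4) →
      y ^ 3 + x ^ 3 = y ^ 2 - (d - 4) → False := by
    intro x y e1 e2 e3
    obtain rfl : y = -(d - 4) - x := by linarith
    have q : 4 * x ^ 2 + 2 * (d - 4) * x - 3 * (d - 4) = 0 := by linear_combination e2 - hd
    have l : (d - 4) * (d - 3) * (4 * x + (d - 3)) = 0 := by
      linear_combination (-8/3) * (e3 + (3 * (d - 4) + 1) / 4 * q + 5/8 * (d - 4) * hd)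
    have l2 : 4 * x + (d - 3) = 0 := by
      rcases mul_eq_zero.mp l with l | l
      · rcases mul_eq_zero.mp l with l | l <;> linarith
      · exact l
    obtain rfl : x = -(d - 3) / 4 := by linarith
    have : -2 * (d - 4) = 0 := by linear_combination q + 1/4 * hd
    linarith
  rcases sq_eq_sq_iff_eq_or_eq_neg.mp hb with rfl | rfl <;>
  rcases sq_eq_sq_iff_eq_or_eq_neg.mp hc with rfl | rfl
  · obtain rfl : r0 = -(d - 4) - 3 * rc := by linarith
    have q : (4 * rc + (d - 3)) * (4 * rc + (d - 5)) = 0 := by linear_combination (4/3) * h2 - (1/3) * hd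
    rcases mul_eq_zero.mp q with q | q
    · refine ⟨by linarith, by linarith, by linarith, by linarith⟩
    · exfalso
      obtain rfl : rc = (5 - d) / 4 := by linarith
      have : -(3/4) * (1 + (d - 4)) = 0 := by linear_combination h3 + 1/16 * (d - 7) * hd
      linarith
  · exact (bad rb r0 (by linarith) (by linarith [h2]) (by linarith)).elim
  · exact (bad rc r0 (by linarith) (by linarith [h2]) (by linarith)).elim
  · exact (bad (-ra) r0 (by linarith) (by linarith [h2]) (by linarith [h3])).elim

theorem KK.add_add_self (x y : KK) : KK.add (KK.add x y) y = x := by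
  cases x <;> cases y <;> rfl

theorem KK.add_self (x : KK) : KK.add x x = o := by cases x <;> rfl

theorem KK.add_o (x : KK) : KK.add x o = x := by cases x <;> rfl

/-- The equations used in the forward direction, on the model group. -/
structure Fwd (E : KK → KK → ℂ) (N : KK → ℂ) (B : KK → KK → KK → ℂ) : Prop where
  pm : ∀ h g, E h g = 1 ∨ E h g = -1
  e1 : ∀ g h k, E (KK.add h k) g = E h g * E k g
  e1' : ∀ h, E h o = 1
  e2 : ∀ g, N g ^ 3 = 1
  e3 : ∀ g, B g o o + B g a o + B g b o + B g c o = -(starRingEnd ℂ) (N g) / dC K4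
  e4 : ∀ g g' k, B g (KK.add o g) k * (starRingEnd ℂ) (B g' (KK.add o g') k)
      + B g (KK.add a g) k * (starRingEnd ℂ) (B g' (KK.add a g') k)
      + B g (KK.add b g) k * (starRingEnd ℂ) (B g' (KK.add b g') k)
      + B g (KK.add c g) k * (starRingEnd ℂ) (B g' (KK.add c g') k)
      = (if KK.eqb g g' = true then (1 : ℂ) else 0)
        - (if KK.eqb k o = true then (1 : ℂ) else 0) * (starRingEnd ℂ) (N g) * N g' / dC K4
  e5 : ∀ g h p q, B g p q
      = E h g * E h (KK.add g p) * E h (KK.add g q) * E h (KK.add (KK.add g p) q) * B g p q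
  e6 : ∀ g h k, B g k h = (starRingEnd ℂ) (B g h k)
  e7 : ∀ g h k, B g h k = N g * E k (KK.add g h) * E k (KK.add g k) *
      E k (KK.add (KK.add g h) k) * B g k (KK.add h k)
  e8 : ∀ g h k, B g h k = N g * N (KK.add g k) * (starRingEnd ℂ) (N (KK.add g h)) *
      (starRingEnd ℂ) (N (KK.add (KK.add g h) k)) * E h g * E h (KK.add g k) * B (KK.add g h) h k
  e8' : ∀ g h k, B g h k = (starRingEnd ℂ) (N g) * (starRingEnd ℂ) (N (KK.add g h)) *
      N (KK.add g k) * N (KK.add (KK.add g h) k) * E k g * E k (KK.add g h) * B (KK.add g k) h k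
  e9 : ∀ g, B g o o ^ 3 + B g o a ^ 3 + B g o b ^ 3 + B g o c ^ 3 = B g o o ^ 2 - 1 / dC K4

theorem conj_cube {n : ℂ} (h : n ^ 3 = 1) : (starRingEnd ℂ) n = n ^ 2 := by
  have h1 : ‖n‖ = 1 := by
    have : ‖n‖ ^ 3 = 1 := by rw [← norm_pow, h, norm_one]
    exact (pow_eq_one_iff_of_nonneg (norm_nonneg n) (by norm_num)).mp this
  have h2 : n * (starRingEnd ℂ) n = 1 := by
    rw [Complex.mul_conj, Complex.normSq_eq_norm_sq, h1]; norm_num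
  have h0 : n ≠ 0 := by rintro rfl; norm_num at h
  apply mul_left_cancel₀ h0
  rw [h2, ← h]; ring

theorem fwd_of {ε : K4 → K4 → ℂ} {η : K4 → ℂ} {A : K4 → K4 → K4 → ℂ} (S : PolySolution ε η A) :
    Fwd (fun h g => ε (toK h) (toK g)) (fun g => η (toK g))
      (fun g h k => A (toK g) (toK h) (toK k)) := by
  have pm : ∀ h g, ε (toK h) (toK g) = 1 ∨ ε (toK h) (toK g) = -1 := fun h g => S.eps_pm _ _
  have e1 : ∀ g h k, ε (toK (KK.add h k)) (toK g) = ε (toK h) (toK g) * ε (toK k) (toK g) := by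
    intro g h k
    have := S.eq1 (toK g) (toK h) (toK k)
    simpa only [toK_add, KK.add_add_self] using this
  have e0 : ∀ g, ε (toK o) (toK g) = 1 := by
    intro g
    have := e1 g o o
    simp only [KK.add] at this
    rcases pm o g with h | h
    · exact h
    · rw [h] at this; norm_num at this
  refine ⟨pm, e1, fun h => S.eq1' _, fun g => S.eq2' _, ?_, ?_, ?_, fun g h k => S.eq6 _ _ _,
    ?_, ?_, ?_, ?_⟩
  · intro g
    have := S.eq3 (toK g)
    rw [sum_toK] at this
    exact this
  · intro g g' k
    have := S.eq4 (toK g) (toK g') (toK k)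
    simpa only [sum_toK, toK_sub, toK_eq, toK_zero] using this
  · intro g h p q
    have := S.eq5 (toK g) (toK h) (toK p) (toK q)
    simpa only [toK_add, KK.add_add_self] using this
  · intro g h k
    have := S.eq7a (toK g) (toK h) (toK k)
    simpa only [toK_add, toK_neg, toK_sub] using this
  · intro g h k
    have := S.eq8a (toK g) (toK h) (toK k)
    simpa only [toK_add] using this
  · intro g h k
    have := S.eq8b (toK g) (toK h) (toK k)
    simpa only [toK_add] using this
  · intro g
    have := S.eq9 (toK g) (toK o) (toK o) (toK o) (toK o)
    unfold Eq9At at this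
    simp only [toK_zero, sum_toK, toK_sub, toK_add, toK_neg, toK_eq, KK.add_o, e0, KK.eqb,
      conj_cube (S.eq2' (toK g)), if_true] at this
    have h3 := S.eq2' (toK g)
    linear_combination this + (A (toK g) (toK o) (toK o) ^ 2 *
      (η (toK g) ^ 6 + η (toK g) ^ 3 + 1) - 1 / dC K4) * h3

theorem row {E : KK → KK → ℂ} {N : KK → ℂ} {B : KK → KK → KK → ℂ} (F : Fwd E N B) (g : KK) :
    N g = 1 ∧ B g o o = (dC K4 - 2) / (dC K4 - 1) ∧ B g a o = -1 / (dC K4 - 1)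
      ∧ B g b o = -1 / (dC K4 - 1) ∧ B g c o = -1 / (dC K4 - 1)
      ∧ Complex.normSq (B g a b) = dR K4 / (dR K4 - 1) ^ 2 := by
  have n3 := F.e2 g
  have cn := conj_cube n3
  have n0 : N g ≠ 0 := by intro h; rw [h] at n3; norm_num at n3
  have nn : Complex.normSq (N g) = 1 := by
    have : ((Complex.normSq (N g) : ℝ) : ℂ) = 1 := by
      rw [← Complex.mul_conj, cn, ← n3]; ring
    exact_mod_cast this
  have pmn : ∀ h g, Complex.normSq (E h g) = 1 := by
    intro h g
    rcases F.pm h g with h | h <;> rw [h] <;> simp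
  have pms : ∀ h g, E h g * E h g = 1 := by
    intro h g
    rcases F.pm h g with h | h <;> rw [h] <;> norm_num
  have pmc : ∀ h g, (starRingEnd ℂ) (E h g) = E h g := by
    intro h g
    rcases F.pm h g with h | h <;> rw [h] <;> simp
  have eo : ∀ g, E o g = 1 := by
    intro g
    have := F.e1 g o o
    simp only [KK.add] at this
    rw [← pms o g, ← this]
  have k00 : B g o o = N g * B g o o := by
    have := F.e7 g o o
    simpa only [KK.add_o, eo, mul_one] using this
  have kh0 : ∀ h, B g h o = N g * B g o h := by
    intro h
    have := F.e7 g h o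
    simpa only [KK.add_o, eo, mul_one] using this
  have khh : ∀ h, B g h h = N g * E h g * B g h o := by
    intro h
    have := F.e7 g h h
    simp only [KK.add_self, KK.add_add_self] at this
    rw [mul_assoc (N g), pms, mul_one] at this
    exact this
  -- the real numbers
  have hr : ∀ h, ∃ r : ℝ, N g * B g h o = r := by
    intro h
    have h1 : (starRingEnd ℂ) (E h g * B g h h) = E h g * B g h h := by
      rw [map_mul, pmc, ← F.e6]
    obtain ⟨r, hr⟩ := Complex.conj_eq_iff_real.mp h1
    refine ⟨r, ?_⟩
    rw [← hr, khh]
    linear_combination (-N g * B g h o) * pms h g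
  obtain ⟨r0, hr0⟩ := hr o
  obtain ⟨ra, hra⟩ := hr a
  obtain ⟨rb, hrb⟩ := hr b
  obtain ⟨rc, hrc⟩ := hr c
  have inv : ∀ (h : KK) (r : ℝ), N g * B g h o = r →
      B g h o = N g ^ 2 * r ∧ B g o h = N g * r ∧ Complex.normSq (B g h o) = r ^ 2
      ∧ Complex.normSq (B g o h) = r ^ 2 ∧ Complex.normSq (B g h h) = r ^ 2 := by
    intro h r hh
    have a1 : B g h o = N g ^ 2 * r := by
      rw [← hh]; linear_combination (-B g h o) * n3
    have a2 : B g o h = N g * r := by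
      have := kh0 h
      apply mul_left_cancel₀ n0
      rw [← this, a1]; ring
    refine ⟨a1, a2, ?_, ?_, ?_⟩
    · rw [a1]; simp [nn, sq]
    · rw [a2]; simp [nn, sq]
    · rw [khh, a1]; simp [nn, pmn, sq]
  obtain ⟨a1, a2, a3, a4, a5⟩ := inv a ra hra
  obtain ⟨b1, b2, b3, b4, b5⟩ := inv b rb hrb
  obtain ⟨c1, c2, c3, c4, c5⟩ := inv c rc hrc
  obtain ⟨o1, o2, o3, o4, o5⟩ := inv o r0 hr0
  have hdd : dC K4 = ((dR K4 : ℝ) : ℂ) := rfl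
  have hd0 := dC_ne
  have sum1 : r0 + ra + rb + rc = -1 / dR K4 := by
    have := F.e3 g
    rw [a1, b1, c1, o1, cn] at this
    have h2 : ((r0 : ℂ) + ra + rb + rc) = -1 / ((dR K4 : ℝ) : ℂ) := by
      rw [← hdd]
      apply mul_left_cancel₀ (pow_ne_zero 2 n0)
      rw [← mul_div_assoc]
      linear_combination this
    exact_mod_cast h2
  have sumk : ∀ k, Complex.normSq (B g o k) + Complex.normSq (B g a k) + Complex.normSq (B g b k)
      + Complex.normSq (B g c k) = 1 - if KK.eqb k o = true then 1 / dR K4 else 0 := by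
    intro k
    have := F.e4 g g k
    simp only [Complex.mul_conj] at this
    rw [mul_assoc _ _ (N g), mul_comm ((starRingEnd ℂ) (N g)), Complex.mul_conj, nn] at this
    have h2 : (((Complex.normSq (B g o k) + Complex.normSq (B g a k) + Complex.normSq (B g b k)
      + Complex.normSq (B g c k)) : ℝ) : ℂ) = ((1 - if KK.eqb k o = true then 1 / dR K4 else 0 : ℝ) : ℂ) := by
      have h3 : KK.eqb g g = true := by cases g <;> rfl
      rw [h3] at this
      have h4 : (((1 - if KK.eqb k o = true then 1 / dR K4 else 0 : ℝ)) : ℂ)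
        = 1 - (if KK.eqb k o = true then (1 : ℂ) else 0) * ((1 : ℝ) : ℂ) / dC K4 := by
        rw [hdd]
        cases KK.eqb k o <;> simp
      rw [h4]
      simp only [if_true] at this
      rw [← this]
      push_cast
      cases g <;> simp only [KK.add] <;> ring
    exact_mod_cast h2
  have so := sumk o
  have sa := sumk a
  have sb := sumk b
  have sc := sumk c
  simp only [KK.eqb, if_true] at so
  simp only [KK.eqb, if_false, Bool.false_eq_true] at sa sb sc
  rw [a3, b3, c3, o3] at so
  have sum3 : r0 ^ 3 + ra ^ 3 + rb ^ 3 + rc ^ 3 = r0 ^ 2 - 1 / dR K4 := by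
    have := F.e9 g
    rw [a2, b2, c2, ← hr0.symm.trans (show N g * B g o o = B g o o from k00.symm)] at this
    have h2 : ((r0 : ℂ) ^ 3 + ra ^ 3 + rb ^ 3 + rc ^ 3) = r0 ^ 2 - 1 / ((dR K4 : ℝ) : ℂ) := by
      rw [← hdd]
      linear_combination this - ((ra : ℂ) ^ 3 + rb ^ 3 + rc ^ 3) * n3
    exact_mod_cast h2
  -- off-diagonal
  have n7 : ∀ h k, Complex.normSq (B g h k) = Complex.normSq (B g k (KK.add h k)) := by
    intro h k
    rw [F.e7 g h k]
    simp [nn, pmn]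
  have n6 : ∀ h k, Complex.normSq (B g k h) = Complex.normSq (B g h k) := by
    intro h k
    rw [F.e6 g h k, Complex.normSq_conj]
  have t1 := n7 a b
  have t2 := n7 b c
  simp only [KK.add] at t1 t2
  have u1 := n6 a b
  have u2 := n6 b c
  have u3 := n6 c a
  have ho : o = KK.o := rfl
  rw [a4, a5] at sa
  rw [b4, b5] at sb
  rw [c4, c5] at sc
  have hba : rb ^ 2 = ra ^ 2 := by linarith
  have hca : rc ^ 2 = ra ^ 2 := by linarith
  obtain ⟨q0, qa, qb, qc⟩ := real_key dR_sq dR_gt hba hca sum1 so sum3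
  have hdg := dR_gt
  have hds := dR_sq
  have hd1 : dR K4 - 1 ≠ 0 := by linarith
  have r0ne : (r0 : ℂ) ≠ 0 := by
    have : r0 ≠ 0 := by
      rw [q0]; exact div_ne_zero (by linarith) hd1
    exact_mod_cast this
  have hN : N g = 1 := by
    have h1 : B g o o = r0 := by rw [← hr0]; exact k00
    rw [h1] at k00
    apply mul_right_cancel₀ r0ne
    rw [one_mul, ← k00]
  rw [hN] at hr0 hra hrb hrc
  refine ⟨hN, ?_, ?_, ?_, ?_, ?_⟩
  · rw [one_mul] at hr0; rw [hr0, q0, hdd]; push_cast; rfl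
  · rw [one_mul] at hra; rw [hra, qa, hdd]; push_cast; rfl
  · rw [one_mul] at hrb; rw [hrb, qb, hdd]; push_cast; rfl
  · rw [one_mul] at hrc; rw [hrc, qc, hdd]; push_cast; rfl
  · have : Complex.normSq (B g a b) = 1 / 2 - ra ^ 2 := by linarith
    rw [this, qa]
    field_simp
    linarith

theorem signs {d z zc p q r v : ℂ} (hp : p = 1 ∨ p = -1) (hq : q = 1 ∨ q = -1)
    (hr : r = 1 ∨ r = -1) (hv : v = 1 ∨ v = -1) (hd1 : d - 1 ≠ 0) (hd2 : d + 1 ≠ 0)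
    (hz : z * zc = d)
    (I1 : 1 + p + p * q * zc ^ 2 + q * z ^ 2 = 0)
    (I2 : 1 + v + r * v * z ^ 2 + r * zc ^ 2 = 0)
    (I3 : 1 + p * q * r * v + p * r * z ^ 2 + q * v * zc ^ 2 = 0)
    (I4 : (q + r) * z + (1 + q * r) * zc = 0) :
    p = -1 ∧ v = -1 ∧ r = -q ∧ z ^ 2 = zc ^ 2 := by
  have two : (2 : ℂ) ≠ 0 := two_ne_zero
  have hqq : q * q = 1 := by rcases hq with rfl | rfl <;> norm_num
  by_cases hqr : r = q
  · exfalso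
    subst hqr
    have hzc : zc = -(r * z) := by
      linear_combination 1/2 * I4 - 1/2 * zc * hqq
    have hz2 : z ^ 2 = -(r * d) := by
      linear_combination (-r) * hz + (r * z) * hzc - z ^ 2 * hqq
    have hc2 : zc ^ 2 = -(r * d) := by
      rw [hzc]; linear_combination z ^ 2 * hqq + hz2
    rw [hz2, hc2] at I1 I2 I3
    have p1 : p = -1 := by
      have : (1 + p) * (d - 1) = 0 := by linear_combination -I1 - (p + 1) * d * hqq
      rcases mul_eq_zero.mp this with h | h
      · linear_combination h
      · exact absurd h hd1
    have v1 : v = -1 := by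
      have : (1 + v) * (d - 1) = 0 := by linear_combination -I2 - (v + 1) * d * hqq
      rcases mul_eq_zero.mp this with h | h
      · linear_combination h
      · exact absurd h hd1
    subst p1
    subst v1
    have : 2 * (d + 1) = 0 := by linear_combination I3 - (1 + 2 * d) * hqq
    rcases mul_eq_zero.mp this with h | h
    · exact two h
    · exact hd2 h
  · have hrq : r = -q := by
      rcases hq with rfl | rfl <;> rcases hr with rfl | rfl <;> simp_all
    subst hrq
    have nd : d ^ 2 - 1 ≠ 0 := by
      have : d ^ 2 - 1 = (d - 1) * (d + 1) := by ring
      rw [this]; exact mul_ne_zero hd1 hd2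
    rcases hp with rfl | rfl <;> rcases hv with rfl | rfl
    · exfalso
      have : (4 : ℂ) = 0 := by linear_combination I1 + I2
      norm_num at this
    · exfalso
      have e1 : z ^ 2 = zc ^ 2 := by linear_combination q * I2 - (z ^ 2 - zc ^ 2) * hqq
      have e2 : z ^ 2 = -q := by linear_combination q / 2 * I1 - (zc ^ 2 + z ^ 2) / 2 * hqq + 1/2 * e1
      apply nd
      rw [← hz]
      have e3 : zc ^ 2 = -q := e1.symm.trans e2
      linear_combination zc ^ 2 * e2 - q * e3 + hqq
    · exfalso
      have e1 : z ^ 2 = zc ^ 2 := by linear_combination q * I1 - (z ^ 2 - zc ^ 2) * hqq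
      have e2 : z ^ 2 = q := by linear_combination (-q / 2) * I2 - (zc ^ 2 + z ^ 2) / 2 * hqq + 1/2 * e1
      apply nd
      rw [← hz]
      have e3 : zc ^ 2 = q := e1.symm.trans e2
      linear_combination zc ^ 2 * e2 + q * e3 + hqq
    · refine ⟨rfl, rfl, rfl, ?_⟩
      linear_combination q * I1 - (z ^ 2 - zc ^ 2) * hqq

theorem fwd_main {E : KK → KK → ℂ} {N : KK → ℂ} {B : KK → KK → KK → ℂ} (F : Fwd E N B) :
    (∀ g, N g = 1) ∧ ∃ (s t : Bool) (z : ℂ), z ^ 2 = sC t * dC K4 ∧ star z = sC t * z ∧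
      (∀ h g, E h g = sC (chiI s h g)) ∧
      ∀ g h k, B g h k = (1 / (dC K4 - 1)) * eE z (AI s t g h k) := by
  have hN : ∀ g, N g = 1 := fun g => (row F g).1
  refine ⟨hN, ?_⟩
  have hd0 := dC_ne
  have hd1 := dC_sub_ne
  have hd := dC_sq
  have hd2 : dC K4 + 1 ≠ 0 := by
    have := dR_gt
    have h : dR K4 + 1 ≠ 0 := by linarith
    unfold dC
    exact_mod_cast h
  have hcd : (starRingEnd ℂ) (dC K4) = dC K4 := Complex.conj_ofReal _
  have pms : ∀ h g, E h g * E h g = 1 := by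
    intro h g
    rcases F.pm h g with h | h <;> rw [h] <;> norm_num
  have eo : ∀ g, E o g = 1 := by
    intro g
    have := F.e1 g o o
    simp only [KK.add] at this
    rw [← pms o g, ← this]
  have e7 : ∀ g h k, B g h k = E k (KK.add g h) * E k (KK.add g k) *
      E k (KK.add (KK.add g h) k) * B g k (KK.add h k) := by
    intro g h k
    have := F.e7 g h k
    rwa [hN, one_mul] at this
  have e8 : ∀ g h k, B g h k = E h g * E h (KK.add g k) * B (KK.add g h) h k := by
    intro g h k
    have := F.e8 g h k
    simpa only [hN, map_one, one_mul] using this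
  have e8' : ∀ g h k, B g h k = E k g * E k (KK.add g h) * B (KK.add g k) h k := by
    intro g h k
    have := F.e8' g h k
    simpa only [hN, map_one, one_mul] using this
  -- entries with a zero index, and diagonal entries
  obtain ⟨τ, hτ⟩ : ∃ τ, τ = 1 / (dC K4 - 1) := ⟨_, rfl⟩
  have τc : (starRingEnd ℂ) τ = τ := by rw [hτ]; simp [hcd]
  have τ0 : τ ≠ 0 := by rw [hτ]; exact one_div_ne_zero hd1
  have z0 : ∀ g, B g a o = -τ ∧ B g b o = -τ ∧ B g c o = -τ := by
    intro g
    obtain ⟨-, -, h1, h2, h3, -⟩ := row F g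
    rw [h1, h2, h3, hτ, neg_div]
    exact ⟨rfl, rfl, rfl⟩
  have z0' : ∀ g, B g o a = -τ ∧ B g o b = -τ ∧ B g o c = -τ := by
    intro g
    obtain ⟨h1, h2, h3⟩ := z0 g
    rw [F.e6 g a o, F.e6 g b o, F.e6 g c o, h1, h2, h3, map_neg, τc]
    exact ⟨rfl, rfl, rfl⟩
  have khh : ∀ g h, B g h h = E h g * B g h o := by
    intro g h
    have := e7 g h h
    simp only [KK.add_self, KK.add_add_self] at this
    rwa [pms, one_mul] at this
  have zd : ∀ g, B g a a = -(E a g * τ) ∧ B g b b = -(E b g * τ) ∧ B g c c = -(E c g * τ) := by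
    intro g
    obtain ⟨h1, h2, h3⟩ := z0 g
    rw [khh, khh, khh, h1, h2, h3]
    refine ⟨?_, ?_, ?_⟩ <;> ring
  have zoo : ∀ g, B g o o = τ * (dC K4 - 2) := by
    intro g
    rw [(row F g).2.1, hτ]; ring
  -- the parameter
  obtain ⟨z, hz⟩ : ∃ z, B o a b = τ * z := ⟨B o a b / τ, by field_simp⟩
  obtain ⟨zc, hzc⟩ : ∃ zc, zc = (starRingEnd ℂ) z := ⟨_, rfl⟩
  have hcz : (starRingEnd ℂ) zc = z := by rw [hzc]; exact Complex.conj_conj z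
  have hzz : z * zc = dC K4 := by
    have h1 := (row F o).2.2.2.2.2
    have h2 : B o a b * (starRingEnd ℂ) (B o a b) = τ ^ 2 * dC K4 := by
      rw [Complex.mul_conj, h1, hτ]
      unfold dC
      push_cast
      rw [one_div, inv_pow, div_eq_mul_inv, mul_comm]
    rw [hz, map_mul, τc, ← hzc] at h2
    apply mul_left_cancel₀ (pow_ne_zero 2 τ0)
    linear_combination h2
  have hab0 : B o a b ≠ 0 := by
    rw [hz]
    refine mul_ne_zero τ0 ?_
    rintro rfl
    rw [zero_mul] at hzz
    exact hd0 hzz.symm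
  have hprod : ∀ l, E l c = E l a * E l b := by
    intro l
    have := F.e5 o l a b
    simp only [KK.add, F.e1', one_mul] at this
    have h2 : E l a * E l b * E l c = 1 := by
      apply mul_right_cancel₀ hab0
      rw [one_mul]; exact this.symm
    have h3 := pms l c
    linear_combination (-E l c) * h2 + E l a * E l b * h3
  have hcs : ∀ g, E c g = E a g * E b g := fun g => F.e1 g a b
  obtain ⟨p, hp⟩ : ∃ p, p = E a a := ⟨_, rfl⟩
  obtain ⟨q, hq⟩ : ∃ q, q = E a b := ⟨_, rfl⟩
  obtain ⟨r, hr⟩ : ∃ r, r = E b a := ⟨_, rfl⟩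
  obtain ⟨v, hv⟩ : ∃ v, v = E b b := ⟨_, rfl⟩
  have pp : p = 1 ∨ p = -1 := hp ▸ F.pm a a
  have qq : q = 1 ∨ q = -1 := hq ▸ F.pm a b
  have rr : r = 1 ∨ r = -1 := hr ▸ F.pm b a
  have vv : v = 1 ∨ v = -1 := hv ▸ F.pm b b
  have hac : E a c = p * q := by rw [hprod, ← hp, ← hq]
  have hbc : E b c = r * v := by rw [hprod, ← hr, ← hv]
  have hca : E c a = p * r := by rw [hcs, ← hp, ← hr]
  have hcb : E c b = q * v := by rw [hcs, ← hq, ← hv]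
  have hcc : E c c = p * q * (r * v) := by rw [hcs, hac, hbc]
  have p2 : p * p = 1 := hp ▸ pms a a
  have q2 : q * q = 1 := hq ▸ pms a b
  have r2 : r * r = 1 := hr ▸ pms b a
  have v2 : v * v = 1 := hv ▸ pms b b
  -- off-diagonal entries
  have cj' : ∀ g h k (x : ℂ), B g h k = τ * x → B g k h = τ * (starRingEnd ℂ) x := by
    intro g h k x hx
    rw [F.e6 g h k, hx, map_mul, τc]
  have obc : B o b c = τ * z := by
    have h := e7 o a b
    simp only [KK.add, ← hr, ← hv, hbc] at h
    rw [← hz, h]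
    linear_combination (-B o b c) * r2 - (B o b c * r * r) * v2
  have oca : B o c a = τ * z := by
    have h := e7 o b c
    simp only [KK.add, hca, hcb, hcc] at h
    rw [← obc, h]
    linear_combination (-B o c a) * p2 - (B o c a * p * p) * q2 - (B o c a * p * p * q * q) * r2
      - (B o c a * p * p * q * q * r * r) * v2
  have oba := cj' _ _ _ _ hz
  have ocb := cj' _ _ _ _ obc
  have oac := cj' _ _ _ _ oca
  rw [← hzc] at oba ocb oac
  -- `B h h k` and `B k h k`
  have s8 : ∀ h k, B h h k = E h k * B o h k := by
    intro h k
    have h1 := e8 o h k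
    simp only [KK.add, F.e1', one_mul] at h1
    rw [h1]
    linear_combination (-B h h k) * pms h k
  have s8' : ∀ h k, B k h k = E k h * B o h k := by
    intro h k
    have h1 := e8' o h k
    simp only [KK.add, F.e1', one_mul] at h1
    rw [h1]
    linear_combination (-B k h k) * pms k h
  have aab : B a a b = τ * (q * z) := by rw [s8, hz, ← hq]; ring
  have aca : B a c a = τ * (p * q * z) := by rw [s8', oca, hac]; ring
  have bbc : B b b c = τ * (r * v * z) := by rw [s8, obc, hbc]; ring
  have bab : B b a b = τ * (r * z) := by rw [s8', hz, ← hr]; ring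
  have cca : B c c a = τ * (p * r * z) := by rw [s8, oca, hca]; ring
  have cbc : B c b c = τ * (q * v * z) := by rw [s8', obc, hcb]; ring
  have abc : B a b c = τ * (q * r * z) := by
    have h := e7 a a b
    simp only [KK.add, F.e1', ← hv, hbc, aab] at h
    linear_combination (-r) * h - B a b c * r * r * v2 - B a b c * r2
  have bca : B b c a = τ * (q * r * z) := by
    have h := e7 b b c
    simp only [KK.add, F.e1', hca, hcc, bbc] at h
    linear_combination (-(q * v)) * h - B b c a * v * q * q * v * (p * p * r2 + p2) - B b c a * v * v * q2
      - B b c a * v2 + τ * q * r * z * v2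
  have cab : B c a b = τ * (q * r * z) := by
    have h := e7 c c a
    simp only [KK.add, F.e1', ← hp, ← hq, hac, cca] at h
    linear_combination (-(p * q)) * h - B c a b * p * p * q2
      - B c a b * p2 + τ * q * r * z * p2
  have hce : ∀ g h k, (starRingEnd ℂ) (B g h k) = B g k h := fun g h k => (F.e6 g h k).symm
  have qc : (starRingEnd ℂ) q = q := by rcases qq with rfl | rfl <;> simp
  have pc : (starRingEnd ℂ) p = p := by rcases pp with rfl | rfl <;> simp
  have rc : (starRingEnd ℂ) r = r := by rcases rr with rfl | rfl <;> simp
  have vc : (starRingEnd ℂ) v = v := by rcases vv with rfl | rfl <;> simp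
  have aba := cj' _ _ _ _ aab
  have aac := cj' _ _ _ _ aca
  have acb := cj' _ _ _ _ abc
  have bcb := cj' _ _ _ _ bbc
  have bba := cj' _ _ _ _ bab
  have bac := cj' _ _ _ _ bca
  have cac := cj' _ _ _ _ cca
  have ccb := cj' _ _ _ _ cbc
  have cba := cj' _ _ _ _ cab
  simp only [map_mul, qc, pc, rc, vc, ← hzc] at aba aac acb bcb bba bac cac ccb cba
  have I1 : 1 + p + p * q * zc ^ 2 + q * z ^ 2 = 0 := by
    have h := F.e4 o a a
    simp only [KK.add, KK.eqb, hce, (z0 _).1, (z0' _).1, (zd _).1, oba, oca, aab, aac, F.e1',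
      ← hp, Bool.false_eq_true, if_false, zero_mul, zero_div, sub_zero,
      map_neg, map_mul, τc, pc, qc, rc, vc] at h
    apply mul_left_cancel₀ (pow_ne_zero 2 τ0)
    linear_combination h
  have I2 : 1 + v + r * v * z ^ 2 + r * zc ^ 2 = 0 := by
    have h := F.e4 o b b
    simp only [KK.add, KK.eqb, hce, (z0 _).2.1, (z0' _).2.1, (zd _).2.1, hz, ocb, bbc, bba, F.e1',
      ← hv, Bool.false_eq_true, if_false, zero_mul, zero_div, sub_zero,
      map_neg, map_mul, τc, pc, qc, rc, vc] at h
    apply mul_left_cancel₀ (pow_ne_zero 2 τ0)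
    linear_combination h
  have I3 : 1 + p * q * r * v + p * r * z ^ 2 + q * v * zc ^ 2 = 0 := by
    have h := F.e4 o c c
    simp only [KK.add, KK.eqb, hce, (z0 _).2.2, (z0' _).2.2, (zd _).2.2, oac, obc, cca, ccb, F.e1',
      hcc, Bool.false_eq_true, if_false, zero_mul, zero_div, sub_zero,
      map_neg, map_mul, τc, pc, qc, rc, vc] at h
    apply mul_left_cancel₀ (pow_ne_zero 2 τ0)
    linear_combination h
  have I4 : (q + r) * z + (1 + q * r) * zc = 0 := by
    have h := F.e4 o b a
    simp only [KK.add, KK.eqb, hce, (z0 _).1, (z0' _).1, (zd _).1, oba, oca, bab, bac, F.e1',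
      ← hq, Bool.false_eq_true, if_false, zero_mul, zero_div, sub_zero,
      map_neg, map_mul, τc, pc, qc, rc, vc] at h
    apply mul_left_cancel₀ (pow_ne_zero 2 τ0)
    linear_combination -h
  obtain ⟨rfl, rfl, rfl, hsq⟩ := signs pp qq rr vv hd1 hd2 hzz I1 I2 I3 I4
  have zne : z ≠ 0 := by
    rintro rfl
    rw [zero_mul] at hzz
    exact hd0 hzz.symm
  obtain ⟨t, ht⟩ : ∃ t : Bool, zc = sC t * z := by
    rcases sq_eq_sq_iff_eq_or_eq_neg.mp hsq with h | h
    · exact ⟨false, by simp [sC, h]⟩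
    · exact ⟨true, by simp [sC, h]⟩
  obtain ⟨s, hs⟩ : ∃ s : Bool, q = sC s := by
    rcases qq with h | h
    · exact ⟨false, by simp [sC, h]⟩
    · exact ⟨true, by simp [sC, h]⟩
  refine ⟨s, t, z, ?_, ?_, ?_, ?_⟩
  · rw [← hzz, ht]
    linear_combination (-z ^ 2) * sC_mul_self t
  · rw [← ht, hzc]; rfl
  · intro h g
    cases h <;> cases g <;> simp only [eo, F.e1', ← hp, ← hq, ← hr, ← hv, hac, hbc, hca, hcb, hcc,
      chiI, hs] <;> cases s <;> simp [sC]
  · intro g h k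
    rw [← hτ]
    cases g <;> cases h <;> cases k <;>
      simp only [zoo, (z0 _).1, (z0 _).2.1, (z0 _).2.2, (z0' _).1, (z0' _).2.1, (z0' _).2.2,
        (zd _).1, (zd _).2.1, (zd _).2.2, F.e1', ← hp, ← hq, ← hr, ← hv, hac, hbc, hca, hcb, hcc,
        hz, obc, oca, oba, ocb, oac, aab, abc, aca, aba, acb, aac, bab, bbc, bca, bba, bcb, bac,
        cab, cbc, cca, cba, ccb, cac, AI, eE, hs, ht] <;> cases s <;> cases t <;> simp [sC]

theorem sqrt_sq_dC : (((Real.sqrt (dR K4) : ℝ) : ℂ)) ^ 2 = dC K4 := by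
  unfold dC
  have := Real.sq_sqrt (show 0 ≤ dR K4 by linarith [dR_gt])
  exact_mod_cast this

theorem z_cases {z : ℂ}
    (h : z = ((Real.sqrt (dR K4) : ℝ) : ℂ) ∨ z = -((Real.sqrt (dR K4) : ℝ) : ℂ) ∨
        z = Complex.I * ((Real.sqrt (dR K4) : ℝ) : ℂ) ∨
        z = -(Complex.I * ((Real.sqrt (dR K4) : ℝ) : ℂ))) :
    ∃ t : Bool, z ^ 2 = sC t * dC K4 ∧ star z = sC t * z := by
  have h1 := sqrt_sq_dC
  rcases h with rfl | rfl | rfl | rfl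
  · exact ⟨false, by simp [sC, h1], by simp [sC]⟩
  · exact ⟨false, by simp [sC, h1], by simp [sC]⟩
  · exact ⟨true, by simp [sC, mul_pow, h1], by simp [sC]⟩
  · exact ⟨true, by simp [sC, mul_pow, h1], by simp [sC]⟩

theorem z_real {z : ℂ} : z ^ 2 = sC false * dC K4 ↔
    (z = ((Real.sqrt (dR K4) : ℝ) : ℂ) ∨ z = -((Real.sqrt (dR K4) : ℝ) : ℂ)) := by
  rw [← sq_eq_sq_iff_eq_or_eq_neg, sqrt_sq_dC]
  simp [sC]

theorem z_imag {z : ℂ} : z ^ 2 = sC true * dC K4 ↔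
    (z = Complex.I * ((Real.sqrt (dR K4) : ℝ) : ℂ) ∨
        z = -(Complex.I * ((Real.sqrt (dR K4) : ℝ) : ℂ))) := by
  rw [← sq_eq_sq_iff_eq_or_eq_neg, mul_pow, sqrt_sq_dC]
  simp [sC]

theorem s_cases {s : ℂ} (h : s = 1 ∨ s = -1) : ∃ b : Bool, s = sC b := by
  rcases h with rfl | rfl
  · exact ⟨false, by simp [sC]⟩
  · exact ⟨true, by simp [sC]⟩

/-- The swap automorphism. -/
def swapK : K4 ≃+ K4 := AddEquiv.prodComm

theorem swapK_o : swapK (toK o) = toK o := rfl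
theorem swapK_a : swapK (toK a) = toK b := rfl
theorem swapK_b : swapK (toK b) = toK a := rfl
theorem swapK_c : swapK (toK c) = toK c := rfl

/-- Automorphisms used. -/
def autK (f : Bool) : K4 ≃+ K4 := bif f then swapK else AddEquiv.refl K4

/-- Their model. -/
def autI (f : Bool) : KK → KK
  | .o => .o
  | .a => bif f then .b else .a
  | .b => bif f then .a else .b
  | .c => .c

theorem autK_toK (f : Bool) (x : KK) : autK f (toK x) = toK (autI f x) := by
  cases f <;> cases x <;> rfl

/-- Gauge used. -/
def gI (e : Bool) : KK → Bool
  | .c => e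
  | _ => false

/-- Gauge used. -/
noncomputable def gK (e : Bool) (x : K4) : ℂ := if x = toK c then sC e else 1

theorem gK_toK (e : Bool) (x : KK) : gK e (toK x) = sC (gI e x) := by
  unfold gK
  simp only [toK_eq]
  cases x <;> simp [KK.eqb, gI, sC]

/-- Check of the equivalences. -/
def ckE (s t f e : Bool) : Bool :=
  KK.all fun g => KK.all fun h => KK.all fun k =>
    (chiI (xor s f) h g == chiI s (autI f h) (autI f g)) &&
    RR.eqb (bif (KK.eqb h .o || KK.eqb k .o || KK.eqb h k) then val (AI (xor s f) t g h k)
        else sg (xor e (f && t)) (val (AI (xor s f) t g h k)))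
      (sg (xor (gI e g) (xor (gI e (KK.add g h)) (xor (gI e (KK.add g k))
        (gI e (KK.add (KK.add g h) k))))) (val (AI s t (autI f g) (autI f h) (autI f k))))

theorem ckE_all (s t f e : Bool) : ckE s t f e = true := by
  cases s <;> cases t <;> cases f <;> cases e <;> decide +kernel

theorem AI_neg (s t m : Bool) (z : ℂ) (g h k : KK) : eE (sC m * z) (AI s t g h k) =
    ev z (bif (KK.eqb h .o || KK.eqb k .o || KK.eqb h k) then val (AI s t g h k)
        else sg m (val (AI s t g h k))) := by
  cases g <;> cases h <;> cases k <;>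
    simp only [KK.eqb, AI, Bool.or_true, Bool.true_or, Bool.or_false, Bool.or_self, cond_true,
      cond_false, ev_sg, ev_val, eE] <;> ring

theorem equiv_of {s t f e : Bool} {z : ℂ} (hs : star z = sC t * z) :
    EquivSol (epsK (sC s)) (fun _ => (1 : ℂ)) (AfunK (sC s) z)
      (epsK (sC (xor s f))) (fun _ => (1 : ℂ)) (AfunK (sC (xor s f)) (sC (xor e (f && t)) * z)) := by
  have hs' : star (sC (xor e (f && t)) * z) = sC t * (sC (xor e (f && t)) * z) := by
    rw [star_mul', hs]
    have : star (sC (xor e (f && t))) = sC (xor e (f && t)) := sC_conj _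
    rw [this]; ring
  refine ⟨gK e, autK f, ?_, ?_, ?_, fun _ => rfl, ?_⟩
  · rw [toK_zero, gK_toK]; simp [gI, sC]
  · intro g
    obtain ⟨g, rfl⟩ := toK_surj g
    rw [gK_toK]
    cases gI e g <;> simp [sC]
  · intro h g
    obtain ⟨h, rfl⟩ := toK_surj h
    obtain ⟨g, rfl⟩ := toK_surj g
    have := all_spec (all_spec (all_spec (ckE_all s t f e) g) h) o
    simp only [Bool.and_eq_true, beq_iff_eq] at this
    simp only [toK_add, KK.add_add_self, gK_toK, sC_mul_self, autK_toK, epsK_toK, this.1, one_mul]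
  · intro g h k
    obtain ⟨g, rfl⟩ := toK_surj g
    obtain ⟨h, rfl⟩ := toK_surj h
    obtain ⟨k, rfl⟩ := toK_surj k
    have := all_spec (all_spec (all_spec (ckE_all s t f e) g) h) k
    simp only [Bool.and_eq_true] at this
    have := congrArg (ev z) (eqb_spec this.2)
    rw [← AI_neg] at this
    simp only [ev_sg, ev_val] at this
    rw [AfunK_toK (xor s f) t _ hs' g h k, this]
    simp only [toK_add, autK_toK, gK_toK, AfunK_toK s t z hs, sC_xor]
    ring

theorem equiv_same {s s' t : Bool} {z z' : ℂ} (hs : star z = sC t * z)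
    (hz : z ^ 2 = sC t * dC K4) (hz' : z' ^ 2 = sC t * dC K4) :
    EquivSol (epsK (sC s)) (fun _ => (1 : ℂ)) (AfunK (sC s) z)
      (epsK (sC s')) (fun _ => (1 : ℂ)) (AfunK (sC s') z') := by
  obtain ⟨m, hm⟩ : ∃ m : Bool, z' = sC m * z := by
    rcases sq_eq_sq_iff_eq_or_eq_neg.mp (hz'.trans hz.symm) with h | h
    · exact ⟨false, by simp [sC, h]⟩
    · exact ⟨true, by simp [sC, h]⟩
  have h := equiv_of (s := s) (t := t) (f := xor s s') (e := xor m ((xor s s') && t)) hs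
  have h1 : xor s (xor s s') = s' := by cases s <;> cases s' <;> rfl
  have h2 : xor (xor m ((xor s s') && t)) ((xor s s') && t) = m := by
    cases m <;> cases ((xor s s') && t) <;> rfl
  rw [h1, h2, ← hm] at h
  exact h

theorem equiv_sq {s s' t t' : Bool} {z z' : ℂ} (hs : star z = sC t * z)
    (hs' : star z' = sC t' * z')
    (h : EquivSol (epsK (sC s)) (fun _ => (1 : ℂ)) (AfunK (sC s) z)
      (epsK (sC s')) (fun _ => (1 : ℂ)) (AfunK (sC s') z')) : z' ^ 2 = z ^ 2 := by
  obtain ⟨δ, θ, -, hδ, -, -, hA⟩ := h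
  have hd1 := dC_sub_ne
  have key := hA (toK o) (toK a) (toK b)
  have hθ0 : θ (toK o) = toK o := map_zero θ
  obtain ⟨x, hx⟩ := toK_surj (θ (toK a))
  obtain ⟨y, hy⟩ := toK_surj (θ (toK b))
  have x0 : x ≠ o := by
    rintro rfl
    rw [← hθ0] at hx
    have := θ.injective hx
    rw [toK_eq] at this
    simp [KK.eqb] at this
  have y0 : y ≠ o := by
    rintro rfl
    rw [← hθ0] at hy
    have := θ.injective hy
    rw [toK_eq] at this
    simp [KK.eqb] at this
  have xy : x ≠ y := by
    rintro rfl
    rw [← hy] at hx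
    have := θ.injective hx
    rw [toK_eq] at this
    simp [KK.eqb] at this
  rw [hθ0, hx, hy, AfunK_toK _ _ _ hs, AfunK_toK _ _ _ hs'] at key
  have sq1 : ∀ g, δ g ^ 2 = 1 := by
    intro g
    rcases hδ g with h | h <;> rw [h] <;> norm_num
  have h2 : (eE z (AI s t o x y)) ^ 2 = z ^ 2 := by
    cases x <;> cases y <;> simp_all [AI, eE, sC] <;> cases t <;> simp
  have h3 : eE z' (AI s' t' o a b) = z' := by simp [AI, eE, sC]
  rw [h3] at key
  have h4 : z' = δ (toK o) * δ (toK o + toK a) * δ (toK o + toK b) * δ (toK o + toK a + toK b)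
      * eE z (AI s t o x y) := by
    apply mul_left_cancel₀ (one_div_ne_zero hd1)
    rw [key]; ring
  rw [h4]
  simp only [mul_pow, sq1, h2, one_mul]

theorem sC_inj {t t' : Bool} {d : ℂ} (hd : d ≠ 0) (h : sC t * d = sC t' * d) : t = t' := by
  have h1 := mul_right_cancel₀ hd h
  cases t <;> cases t' <;> simp [sC] at h1 ⊢
  · norm_num [eq_neg_iff_add_eq_zero] at h1
  · norm_num [neg_eq_iff_add_eq_zero] at h1

/-- Classification of solutions of the polynomial equations for the Klein four-group
`G = ℤ/2 × ℤ/2` (where `d = 2+√5`): the solutions are exactly the explicit families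
parametrized by `s ∈ {1,−1}` and `z ∈ {√d, −√d, i√d, −i√d}`, and under gauge
transformations and automorphisms of `G` they form exactly two orbits, according to
whether `z` is real or purely imaginary. -/
theorem polySolution_klein_four_classification :
    dR K4 = 2 + Real.sqrt 5 ∧
    (∀ (ε : K4 → K4 → ℂ) (η : K4 → ℂ) (A : K4 → K4 → K4 → ℂ),
      PolySolution ε η A ↔
        ∃ s z : ℂ, (s = 1 ∨ s = -1) ∧
          (z = ((Real.sqrt (dR K4) : ℝ) : ℂ) ∨ z = -((Real.sqrt (dR K4) : ℝ) : ℂ) ∨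
            z = Complex.I * ((Real.sqrt (dR K4) : ℝ) : ℂ) ∨
            z = -(Complex.I * ((Real.sqrt (dR K4) : ℝ) : ℂ))) ∧
          (∀ g : K4, η g = 1) ∧ ε = epsK s ∧ A = AfunK s z) ∧
    (∀ s z s' z' : ℂ, (s = 1 ∨ s = -1) → (s' = 1 ∨ s' = -1) →
      (z = ((Real.sqrt (dR K4) : ℝ) : ℂ) ∨ z = -((Real.sqrt (dR K4) : ℝ) : ℂ) ∨
        z = Complex.I * ((Real.sqrt (dR K4) : ℝ) : ℂ) ∨
        z = -(Complex.I * ((Real.sqrt (dR K4) : ℝ) : ℂ))) →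
      (z' = ((Real.sqrt (dR K4) : ℝ) : ℂ) ∨ z' = -((Real.sqrt (dR K4) : ℝ) : ℂ) ∨
        z' = Complex.I * ((Real.sqrt (dR K4) : ℝ) : ℂ) ∨
        z' = -(Complex.I * ((Real.sqrt (dR K4) : ℝ) : ℂ))) →
      (EquivSol (epsK s) (fun _ => (1 : ℂ)) (AfunK s z)
          (epsK s') (fun _ => (1 : ℂ)) (AfunK s' z') ↔
        (((z = ((Real.sqrt (dR K4) : ℝ) : ℂ) ∨ z = -((Real.sqrt (dR K4) : ℝ) : ℂ)) ∧
            (z' = ((Real.sqrt (dR K4) : ℝ) : ℂ) ∨ z' = -((Real.sqrt (dR K4) : ℝ) : ℂ))) ∨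
          ((z = Complex.I * ((Real.sqrt (dR K4) : ℝ) : ℂ) ∨
              z = -(Complex.I * ((Real.sqrt (dR K4) : ℝ) : ℂ))) ∧
            (z' = Complex.I * ((Real.sqrt (dR K4) : ℝ) : ℂ) ∨
              z' = -(Complex.I * ((Real.sqrt (dR K4) : ℝ) : ℂ))))))) := by
  refine ⟨dR_eq, ?_, ?_⟩
  · intro ε η A
    constructor
    · intro S
      obtain ⟨hN, s, t, z, hz, hs, hE, hB⟩ := fwd_main (fwd_of S)
      refine ⟨sC s, z, ?_, ?_, ?_, ?_, ?_⟩
      · cases s <;> simp [sC]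
      · cases t
        · rcases z_real.mp hz with h | h
          · exact Or.inl h
          · exact Or.inr (Or.inl h)
        · exact Or.inr (Or.inr (z_imag.mp hz))
      · intro g
        obtain ⟨g, rfl⟩ := toK_surj g
        exact hN g
      · funext h g
        obtain ⟨h, rfl⟩ := toK_surj h
        obtain ⟨g, rfl⟩ := toK_surj g
        rw [epsK_toK]
        exact hE h g
      · funext g h k
        obtain ⟨g, rfl⟩ := toK_surj g
        obtain ⟨h, rfl⟩ := toK_surj h
        obtain ⟨k, rfl⟩ := toK_surj k
        rw [AfunK_toK s t z hs]
        exact hB g h k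
    · rintro ⟨s, z, hs, hz, hη, rfl, rfl⟩
      obtain ⟨s, rfl⟩ := s_cases hs
      obtain ⟨t, h1, h2⟩ := z_cases hz
      exact back h1 h2 η hη
  · intro s z s' z' hs hs' hz hz'
    obtain ⟨s, rfl⟩ := s_cases hs
    obtain ⟨s', rfl⟩ := s_cases hs'
    obtain ⟨t, h1, h2⟩ := z_cases hz
    obtain ⟨t', h1', h2'⟩ := z_cases hz'
    rw [← z_real, ← z_real, ← z_imag, ← z_imag]
    constructor
    · intro h
      have h3 := equiv_sq h2 h2' h
      rw [h1, h1'] at h3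
      obtain rfl := sC_inj dC_ne h3
      cases t'
      · exact Or.inl ⟨h1, h1'⟩
      · exact Or.inr ⟨h1, h1'⟩
    · rintro (⟨h3, h4⟩ | ⟨h3, h4⟩)
      · obtain rfl := sC_inj dC_ne (h1.symm.trans h3)
        exact equiv_same h2 h3 h4
      · obtain rfl := sC_inj dC_ne (h1.symm.trans h3)
        exact equiv_same h2 h3 h4
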